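/- arXiv:1712.07276 — 2 statements merged into one kernel-verified Lean document; each statement's English description precedes it below -/
import Mathlib

section
/- If a function f : ℕ → ℕ is computable (Computable f), then there exists a time-constructible function f' : ℕ → ℕ with f(n) ≤ f'(n) for all n ∈ ℕ. -/
/-!
The running time of a machine can dominate a given computable function for reasons of space: a
step of a stack machine pushes only boundedly many symbols, so a machine that leaves a long output
must have run for a long time.

Given a computable `f`, put `F m = ∑ k ≤ m, f k` and `g m = 2 ^ (2 * F m)`. The function `g` is
computable, so `Nat.Partrec'` and `Turing.ToPartrec.Code.exists_code` provide a code `c` for it,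
and `Turing.PartrecToTM2.tr` evaluates `c` on a four-stack machine whose numbers are written in
binary. Every label of this machine pushes at most two symbols
(`TimeConstr.pushes_tr_le`), whereas its output `g m` occupies more than `2 * F m` cells
(`TimeConstr.lt_two_pow_length_trNat`).

The machine `TimeConstr.machine c` has one additional stack, which holds the Boolean input. It
first replaces every input bit by the digit `0` on top of a single digit `1`, which turns an input
of length `n` into the binary expansion of `2 ^ n`
(`TimeConstr.trList_two_pow`), and then simulates the evaluation of `c` step by step. The contents
of the input are forgotten in the first phase, so the running time depends on `n` only. The main
stack has `n + 2` symbols when the simulation starts, so a simulation of `T` steps satisfies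
`2 * F (2 ^ n) ≤ n + 2 + 2 * T`; the `n + 2` steps of the first phase absorb the summand `n + 2`,
and the total time `n + 2 + T` is at least `F (2 ^ n) ≥ f n` because `n ≤ 2 ^ n`.
-/

/-- A function `f : ℕ → ℕ` is *time-constructible* if there is a Turing machine in Mathlib's
two-stack model (`Turing.FinTM2`, with the standard finite encoding of inputs, i.e. the input
alphabet is `Bool`) that on every input of length `n` halts after exactly `f n` steps:
the `f n`-fold iterate of the step function from the initial configuration is the first
iterate that is in a halting configuration. -/
def TimeConstructible (f : ℕ → ℕ) : Prop :=
  ∃ tm : Turing.FinTM2, tm.Γ tm.k₀ = Bool ∧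
    ∀ l : List (tm.Γ tm.k₀),
      (∃ c : tm.Cfg,
          (flip bind tm.step)^[f l.length] (some (Turing.initList tm l)) = some c ∧
          tm.step c = none) ∧
      ∀ k < f l.length, ∀ c : tm.Cfg,
        (flip bind tm.step)^[k] (some (Turing.initList tm l)) = some c → tm.step c ≠ none

namespace TimeConstr

open Turing Turing.TM2 Turing.PartrecToTM2 Function

/-! ### Halting times of deterministic step functions -/

/-- `HaltsIn step t a` says that the run of `step` from `a` takes exactly `t` steps to reach a
halting configuration, one on which `step` returns `none`. -/
def HaltsIn {α : Type} (step : α → Option α) : ℕ → α → Prop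
  | 0, a => step a = none
  | t + 1, a => ∃ b, step a = some b ∧ HaltsIn step t b

theorem iterate_bind_none {α : Type} (step : α → Option α) (k : ℕ) :
    (flip bind step)^[k] (none : Option α) = none := by
  induction k with
  | zero => rfl
  | succ k ih => exact ih

theorem HaltsIn.exists_iterate {α : Type} {step : α → Option α} {t : ℕ} {a : α}
    (h : HaltsIn step t a) : ∃ c, (flip bind step)^[t] (some a) = some c ∧ step c = none := by
  induction t generalizing a with
  | zero => exact ⟨a, rfl, h⟩
  | succ t ih =>
    obtain ⟨b, hab, hb⟩ := h
    obtain ⟨c, h₁, h₂⟩ := ih hb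
    refine ⟨c, ?_, h₂⟩
    rw [iterate_succ_apply, ← h₁]
    exact congrArg _ hab

theorem HaltsIn.ne_none_of_lt {α : Type} {step : α → Option α} {t : ℕ} {a : α}
    (h : HaltsIn step t a) {k : ℕ} (hk : k < t) {c : α}
    (hc : (flip bind step)^[k] (some a) = some c) : step c ≠ none := by
  induction k generalizing t a with
  | zero =>
    obtain ⟨t, rfl⟩ := Nat.exists_eq_succ_of_ne_zero (Nat.ne_of_gt hk)
    obtain ⟨b, hab, _⟩ := h
    cases hc
    simp [hab]
  | succ k ih =>
    obtain ⟨t, rfl⟩ := Nat.exists_eq_succ_of_ne_zero (Nat.ne_of_gt (Nat.zero_lt_of_lt hk))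
    obtain ⟨b, hab, hb⟩ := h
    refine ih hb (Nat.lt_of_succ_lt_succ hk) ?_
    rw [iterate_succ_apply] at hc
    rw [← hc]
    exact (congrArg _ hab).symm

/-! ### Growth of the stacks -/

/-- An upper bound for the number of symbols that one execution of a statement pushes. -/
def pushes {K : Type} {Γ : K → Type} {Λ σ : Type} : Stmt Γ Λ σ → ℕ
  | .push _ _ q => pushes q + 1
  | .peek _ _ q => pushes q
  | .pop _ _ q => pushes q
  | .load _ q => pushes q
  | .branch _ q₁ q₂ => max (pushes q₁) (pushes q₂)
  | .goto _ => 0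
  | .halt => 0

theorem length_stepAux_le {K : Type} [DecidableEq K] {Γ : K → Type} {Λ σ : Type}
    (q : Stmt Γ Λ σ) (v : σ) (S : ∀ k, List (Γ k)) (k : K) :
    ((stepAux q v S).stk k).length ≤ (S k).length + pushes q := by
  induction q generalizing v S with
  | push k' f q ih =>
    refine (ih v _).trans ?_
    rcases eq_or_ne k k' with rfl | h
    · simp [pushes, add_assoc, add_comm]
    · simp [pushes, h]
  | peek k' f q ih => exact ih _ _
  | pop k' f q ih =>
    refine (ih _ _).trans ?_
    rcases eq_or_ne k k' with rfl | h
    · simp [pushes]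
    · simp [pushes, h]
  | load a q ih => exact ih _ _
  | branch f q₁ q₂ ih₁ ih₂ =>
    have h₁ := ih₁ v S
    have h₂ := ih₂ v S
    simp only [stepAux, pushes]
    cases f v <;> simp only [cond_true, cond_false] <;> omega
  | goto f => simp [stepAux, pushes]
  | halt => simp [stepAux, pushes]

theorem pushes_tr_le (q : Λ') : pushes (tr q) ≤ 2 := by
  cases q with
  | ret k => cases k <;> simp [tr, pushes]
  | _ => simp [tr, pushes]

/-! ### Binary notation on the stacks -/

theorem lt_two_pow_length_trPosNum (p : PosNum) : (p : ℕ) < 2 ^ (trPosNum p).length := by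
  induction p with
  | one => simp [trPosNum]
  | bit0 p ih => simp only [trPosNum, PosNum.cast_bit0, List.length_cons, pow_succ]; omega
  | bit1 p ih => simp only [trPosNum, PosNum.cast_bit1, List.length_cons, pow_succ]; omega

theorem lt_two_pow_length_trNat (n : ℕ) : n < 2 ^ (trNat n).length := by
  have key : ∀ m : Num, (m : ℕ) < 2 ^ (trNum m).length := by
    rintro (_ | p)
    · simp [trNum]
    · exact lt_two_pow_length_trPosNum p
  simpa [trNat] using key (n : Num)

theorem trList_two_pow (n : ℕ) :
    trList [2 ^ n] = List.replicate n Γ'.bit0 ++ [Γ'.bit1, Γ'.cons] := by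
  have key : ∃ p : PosNum, ((2 ^ n : ℕ) : Num) = Num.pos p ∧
      trPosNum p = List.replicate n Γ'.bit0 ++ [Γ'.bit1] := by
    induction n with
    | zero => exact ⟨1, rfl, rfl⟩
    | succ n ih =>
      obtain ⟨p, h₁, h₂⟩ := ih
      refine ⟨p.bit0, ?_, by simp [trPosNum, h₂, List.replicate_succ]⟩
      rw [pow_succ, mul_two, Num.add_of_nat, h₁, Num.bit0_of_bit0]
      rfl
  obtain ⟨p, h₁, h₂⟩ := key
  simp only [trList, trNat, h₁, trNum, h₂]
  simp

/-! ### The machine -/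

instance : Fintype K' where
  elems := {K'.main, K'.rev, K'.aux, K'.stack}
  complete k := by cases k <;> simp

/-- The stack alphabets: Booleans on the input stack `none`, and the alphabet of the evaluator on
its four stacks. -/
abbrev Alph : Option K' → Type
  | none => Bool
  | some _ => Γ'

/-- The label of the machine that stands for the evaluator label `q`. The labels `Sum.inl false`
and `Sum.inl true` belong to the input phase, and the former also serves as a junk value for
evaluator labels outside the finite set `S`. -/
noncomputable def lift (S : Finset Λ') (q : Λ') : Bool ⊕ S :=
  if h : q ∈ S then Sum.inr ⟨q, h⟩ else Sum.inl false

/-- A statement of the evaluator, read as a statement of the machine. -/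
noncomputable def liftStmt (S : Finset Λ') :
    Stmt (fun _ : K' => Γ') Λ' (Option Γ') → Stmt Alph (Bool ⊕ S) (Option Γ')
  | .push k f q => .push (some k) f (liftStmt S q)
  | .peek k f q => .peek (some k) f (liftStmt S q)
  | .pop k f q => .pop (some k) f (liftStmt S q)
  | .load a q => .load a (liftStmt S q)
  | .branch f q₁ q₂ => .branch f (liftStmt S q₁) (liftStmt S q₂)
  | .goto l => .goto fun v => lift S (l v)
  | .halt => .halt

/-- The stacks of the machine, given the input stack and the four stacks of the evaluator. -/
def joinStk (i : List Bool) (T : K' → List Γ') : ∀ k, List (Alph k)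
  | none => i
  | some k => T k

theorem update_joinStk_some (i : List Bool) (T : K' → List Γ') (k : K') (L : List Γ') :
    update (joinStk i T) (some k) L = joinStk i (update T k L) := by
  funext k'
  cases k' with
  | none => rfl
  | some k' =>
    rcases eq_or_ne k' k with rfl | h
    · rw [update_self]; exact (update_self k' L T).symm
    · rw [update_of_ne (by simpa using h)]; exact (update_of_ne h L T).symm

theorem update_joinStk_none (i j : List Bool) (T : K' → List Γ') :
    update (joinStk i T) none j = joinStk j T := by
  funext k
  cases k with
  | none => rw [update_self]; rfl
  | some k => rw [update_of_ne (by simp)]; rfl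

/-- A configuration of the evaluator, read as a configuration of the machine whose input stack
is empty. -/
noncomputable def liftCfg (S : Finset Λ') (c : TM2.Cfg (fun _ : K' => Γ') Λ' (Option Γ')) :
    TM2.Cfg Alph (Bool ⊕ S) (Option Γ') :=
  ⟨c.l.map (lift S), c.var, joinStk [] c.stk⟩

theorem stepAux_liftStmt (S : Finset Λ') (q : Stmt (fun _ : K' => Γ') Λ' (Option Γ'))
    (v : Option Γ') (T : K' → List Γ') :
    stepAux (liftStmt S q) v (joinStk [] T) = liftCfg S (stepAux q v T) := by
  induction q generalizing v T with
  | push k f q ih =>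
    simp only [liftStmt, stepAux]
    rw [← ih, ← update_joinStk_some]; rfl
  | peek k f q ih =>
    simp only [liftStmt, stepAux]
    rw [← ih]; rfl
  | pop k f q ih =>
    simp only [liftStmt, stepAux]
    rw [← ih, ← update_joinStk_some]; rfl
  | load a q ih => exact ih _ _
  | branch f q₁ q₂ ih₁ ih₂ =>
    simp only [liftStmt, stepAux]
    cases f v
    · exact ih₂ _ _
    · exact ih₁ _ _
  | goto l => rfl
  | halt => rfl

/-- The program. The label `Sum.inl false` writes the number `1`, the label `Sum.inl true` moves
the input to the main stack while replacing each bit by the digit `0`, and the remaining labels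
evaluate the code. -/
noncomputable def prog (S : Finset Λ') (q₀ : Λ') :
    Bool ⊕ S → Stmt Alph (Bool ⊕ S) (Option Γ')
  | .inl false =>
    .push (some K'.main) (fun _ => Γ'.cons) <| .push (some K'.main) (fun _ => Γ'.bit1) <|
      .goto fun _ => .inl true
  | .inl true =>
    .pop none (fun _ o => o.map fun _ => Γ'.bit0) <|
      .branch Option.isSome
        (.push (some K'.main) (fun _ => Γ'.bit0) <| .goto fun _ => .inl true)
        (.goto fun _ => lift S q₀)
  | .inr q => liftStmt S (tr q)

/-- The machine that evaluates the code `c` at `2 ^ n` for an input of length `n`. -/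
noncomputable def machine (c : ToPartrec.Code) : FinTM2 where
  K := Option K'
  k₀ := none
  k₁ := some K'.main
  Γ := Alph
  Λ := Bool ⊕ codeSupp c Cont'.halt
  main := .inl false
  σ := Option Γ'
  initialState := none
  Γk₀Fin := inferInstanceAs (Fintype Bool)
  m := prog (codeSupp c Cont'.halt) (trNormal c Cont'.halt)

theorem step_liftCfg (S : Finset Λ') (q₀ : Λ') (c : TM2.Cfg (fun _ : K' => Γ') Λ' (Option Γ'))
    (hc : c.l ∈ Finset.insertNone S) :
    TM2.step (prog S q₀) (liftCfg S c) = (TM2.step tr c).map (liftCfg S) := by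
  obtain ⟨_ | l, v, T⟩ := c
  · rfl
  · have hl : l ∈ S := Finset.some_mem_insertNone.1 hc
    have hlift : lift S l = Sum.inr ⟨l, hl⟩ := dif_pos hl
    simp only [liftCfg, Option.map_some, hlift, TM2.step, prog]
    exact congrArg some (stepAux_liftStmt S (tr l) v T)

/-! ### Running times -/

/-- A halting run of the evaluator is reproduced in the same time `T` by the machine, and the
growth of the main stack during the run bounds `T` from below. -/
theorem exists_haltsIn_liftCfg (c : ToPartrec.Code)
    {a b : TM2.Cfg (fun _ : K' => Γ') Λ' (Option Γ')}
    (hab : StateTransition.Reaches (TM2.step tr) a b) (hb : TM2.step tr b = none)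
    (ha : a.l ∈ Finset.insertNone (codeSupp c Cont'.halt)) :
    ∃ T, HaltsIn (machine c).step T (liftCfg (codeSupp c Cont'.halt) a) ∧
      (b.stk K'.main).length ≤ (a.stk K'.main).length + 2 * T := by
  induction hab using Relation.ReflTransGen.head_induction_on with
  | refl =>
    refine ⟨0, ?_, by simp⟩
    change TM2.step (prog _ _) _ = none
    rw [step_liftCfg _ _ _ ha, hb]
    rfl
  | @head a a' h _ ih =>
    have ha' := @step_supports _ _ _ _ ⟨trNormal c Cont'.halt⟩ _ tr _
      (tr_supports c Cont'.halt) a a' h ha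
    obtain ⟨T, hT, hlen⟩ := ih ha'
    refine ⟨T + 1, ⟨_, ?_, hT⟩, ?_⟩
    · change TM2.step (prog _ _) _ = _
      rw [step_liftCfg _ _ _ ha, Option.mem_def.1 h]
      rfl
    · obtain ⟨_ | l, v, U⟩ := a
      · cases h
      · cases h
        have h₁ := length_stepAux_le (tr l) v U K'.main
        have h₂ := pushes_tr_le l
        dsimp only at hlen h₁ ⊢
        omega

/-- The input loop takes `l.length + 1` steps and forgets everything about `l` but its length. -/
theorem haltsIn_loop (c : ToPartrec.Code) (T n : ℕ) (l : List Bool) (v : Option Γ')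
    (m : List Γ')
    (h : HaltsIn (machine c).step T (liftCfg (codeSupp c Cont'.halt)
      ⟨some (trNormal c Cont'.halt), none,
        K'.elim (List.replicate (l.length + n) Γ'.bit0 ++ m) [] [] []⟩)) :
    HaltsIn (machine c).step (l.length + 1 + T)
      (⟨some (.inl true), v, joinStk l (K'.elim (List.replicate n Γ'.bit0 ++ m) [] [] [])⟩ :
        TM2.Cfg Alph (Bool ⊕ codeSupp c Cont'.halt) (Option Γ')) := by
  induction l generalizing n v with
  | nil =>
    rw [List.length_nil, zero_add, add_comm]
    refine ⟨_, ?_, h⟩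
    change some (stepAux (prog _ _ (.inl true)) _ _) = _
    simp only [prog, stepAux]
    rw [update_joinStk_none]
    simp [joinStk, liftCfg]
    rfl
  | cons x l ih =>
    rw [List.length_cons, show l.length + 1 + 1 + T = l.length + 1 + T + 1 by omega]
    refine ⟨_, ?_, ih (n + 1) (some Γ'.bit0) ?_⟩
    · change some (stepAux (prog _ _ (.inl true)) _ _) = _
      simp only [prog, stepAux]
      rw [update_joinStk_none]
      rw [update_joinStk_some, K'.elim_update_main]
      rfl
    · rw [List.length_cons, show l.length + 1 + n = l.length + (n + 1) by omega] at h
      exact h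

theorem haltsIn_initList (c : ToPartrec.Code) (T : ℕ) (l : List Bool)
    (h : HaltsIn (machine c).step T
      (liftCfg (codeSupp c Cont'.halt) (PartrecToTM2.init c [2 ^ l.length]))) :
    HaltsIn (machine c).step (l.length + 2 + T) (initList (machine c) l) := by
  rw [show l.length + 2 + T = l.length + 1 + T + 1 by omega]
  refine ⟨_, ?_, haltsIn_loop c T 0 l none [Γ'.bit1, Γ'.cons] ?_⟩
  · have hinit : initList (machine c) l =
        (⟨some (.inl false), none, joinStk l (K'.elim [] [] [] [])⟩ :
          TM2.Cfg Alph (Bool ⊕ codeSupp c Cont'.halt) (Option Γ')) := by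
      unfold initList
      congr 1
      funext k
      rcases k with _ | _ | _ | _ | _ <;> rfl
    rw [hinit]
    change some (stepAux (prog _ (trNormal c Cont'.halt) (.inl false)) _ _) = _
    simp only [prog, stepAux]
    rw [update_joinStk_some, update_joinStk_some, K'.elim_update_main, K'.elim_update_main]
    rfl
  · rw [add_zero, ← trList_two_pow]
    exact h

/-! ### The computable function to evaluate -/

theorem exists_code_of_computable {g : ℕ → ℕ} (hg : Computable g) :
    ∃ c : ToPartrec.Code, ∀ m, c.eval [m] = pure [g m] := by
  obtain ⟨c, hc⟩ := ToPartrec.Code.exists_code (Nat.Partrec'.part_iff₁.2 hg.partrec)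
  refine ⟨c, fun m => ?_⟩
  have h := hc (m ::ᵥ List.Vector.nil)
  simp only [PFun.coe_val, List.Vector.head_cons] at h
  exact h.trans (Part.map_some _ _)

theorem computable_two_pow_sum {f : ℕ → ℕ} (hf : Computable f) :
    Computable fun m => 2 ^ (2 * ∑ k ∈ Finset.range (m + 1), f k) := by
  have hsum : Computable fun m => ∑ k ∈ Finset.range m, f k := by
    have hstep : Computable₂ fun (_ : ℕ) (p : ℕ × ℕ) => p.2 + f p.1 :=
      (Primrec.nat_add.to_comp.comp (Computable.snd.comp Computable.snd)
        (hf.comp (Computable.fst.comp Computable.snd))).to₂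
    refine (Computable.nat_rec Computable.id (Computable.const 0) hstep).of_eq fun m => ?_
    induction m with
    | zero => rfl
    | succ m ih => rw [Finset.sum_range_succ, ← ih]; rfl
  have hpow : Computable fun m : ℕ => 2 ^ m := by
    have hstep : Computable₂ fun (_ : ℕ) (p : ℕ × ℕ) => p.2 * 2 :=
      (Primrec.nat_mul.to_comp.comp (Computable.snd.comp Computable.snd)
        (Computable.const 2)).to₂
    refine (Computable.nat_rec Computable.id (Computable.const 1) hstep).of_eq fun m => ?_
    induction m with
    | zero => rfl
    | succ m ih => rw [pow_succ, ← ih]; rfl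
  exact hpow.comp (Primrec.nat_mul.to_comp.comp (Computable.const 2)
    (hsum.comp Computable.succ))

/-- A code computing `2 ^ (2 * ∑ k ≤ m, f k)` yields a machine whose running time depends only on
the length of the input and is at least `f`. -/
theorem exists_time (f : ℕ → ℕ) (c : ToPartrec.Code)
    (hc : ∀ m, c.eval [m] = pure [2 ^ (2 * ∑ k ∈ Finset.range (m + 1), f k)]) (n : ℕ) :
    ∃ t, f n ≤ t ∧ ∀ l : List Bool, l.length = n →
      HaltsIn (machine c).step t (initList (machine c) l) := by
  set g := 2 ^ (2 * ∑ k ∈ Finset.range (2 ^ n + 1), f k) with hg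
  have hmem : PartrecToTM2.halt [g] ∈
      StateTransition.eval (TM2.step tr) (PartrecToTM2.init c [2 ^ n]) := by
    rw [PartrecToTM2.tr_eval, hc]
    exact Part.mem_map _ (Part.mem_some _)
  obtain ⟨hreach, hhalt⟩ := StateTransition.mem_eval.1 hmem
  obtain ⟨T, hT, hlen⟩ := exists_haltsIn_liftCfg c hreach hhalt
    (Finset.some_mem_insertNone.2 (codeSupp_self _ _ (trStmts₁_self _)))
  refine ⟨n + 2 + T, ?_, ?_⟩
  · have h₁ : (trNat g).length + 1 ≤ n + 2 + 2 * T := by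
      have h₂ : (trList [g]).length ≤ (trList [2 ^ n]).length + 2 * T := hlen
      rw [trList_two_pow n] at h₂
      simpa only [trList, List.length_append, List.length_replicate, List.length_cons,
        List.length_nil] using h₂
    have h₃ : 2 * ∑ k ∈ Finset.range (2 ^ n + 1), f k < (trNat g).length := by
      have := lt_two_pow_length_trNat g
      rw [hg] at this
      exact (Nat.pow_lt_pow_iff_right (by norm_num)).1 this
    have h₄ : f n ≤ ∑ k ∈ Finset.range (2 ^ n + 1), f k :=
      Finset.single_le_sum (fun _ _ => Nat.zero_le _)
        (Finset.mem_range.2 (Nat.lt_succ_of_lt Nat.lt_two_pow_self))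
    omega
  · rintro l rfl
    exact haltsIn_initList c T l hT

end TimeConstr

/-- If `f : ℕ → ℕ` is computable, then there exists a time-constructible function
`f' : ℕ → ℕ` with `f n ≤ f' n` for all `n`. -/
theorem exists_timeConstructible_ge_of_computable (f : ℕ → ℕ) (hf : Computable f) :
    ∃ f' : ℕ → ℕ, TimeConstructible f' ∧ ∀ n, f n ≤ f' n := by
  obtain ⟨c, hc⟩ := TimeConstr.exists_code_of_computable (TimeConstr.computable_two_pow_sum hf)
  choose f' hle hhalt using TimeConstr.exists_time f c hc
  refine ⟨f', ⟨TimeConstr.machine c, rfl, fun l => ?_⟩, hle⟩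
  have h := hhalt (List.length (α := Bool) l) l rfl
  exact ⟨h.exists_iterate, fun k hk d hd => h.ne_none_of_lt hk hd⟩
end

section
/- For a code c : Nat.Partrec.Code that halts on its own encoding, let t(c) be the least k ∈ ℕ such that (Nat.Partrec.Code.evaln k c (Encodable.encode c)).isSome. The promise problem over ℕ with A_yes = {Encodable.encode c | c halts on its own encoding and t(c) is even} and A_no = {Encodable.encode c | c halts on its own encoding and t(c) is odd} is decidable but not totally decidable. -/
/-!
Minimal halting times can be found by unbounded search: for an input `m`, decode the code `c` with
`encode c = m` and look for the least `k` at which `evaln k c m` returns a value. This search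
succeeds exactly when `c` halts on `m`, and then the parity of `k` is the answer, so the promise
problem is decidable by a partial computable function.

A total decider `f` would return `2` on `encode c` exactly when `c` does not halt on `encode c`,
because every halting time is even or odd. The partial computable function that halts on `n` iff
`f n = 2` has a code `c`, and running `c` on its own encoding gives a contradiction.
-/

/-- For a code `c` (halting on its own encoding), the least number of steps `k` such that the
step-bounded evaluation of `c` on its own encoding returns a result. -/
noncomputable def haltTime (c : Nat.Partrec.Code) : ℕ :=
  sInf {k | (Nat.Partrec.Code.evaln k c (Encodable.encode c)).isSome}

/-- Yes-instances: encodings of codes that halt on their own encoding in an even number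
of steps. -/
def Ayes : Set ℕ :=
  {m | ∃ c : Nat.Partrec.Code, m = Encodable.encode c ∧
    (c.eval (Encodable.encode c)).Dom ∧ Even (haltTime c)}

/-- No-instances: encodings of codes that halt on their own encoding in an odd number
of steps. -/
def Ano : Set ℕ :=
  {m | ∃ c : Nat.Partrec.Code, m = Encodable.encode c ∧
    (c.eval (Encodable.encode c)).Dom ∧ Odd (haltTime c)}

open Nat.Partrec (Code)

theorem exists_evaln_isSome_iff (c : Code) (n : ℕ) :
    (∃ k, (Code.evaln k c n).isSome) ↔ (c.eval n).Dom := by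
  simp only [Part.dom_iff_mem, Code.evaln_complete, Option.isSome_iff_exists, Option.mem_def]
  exact exists_comm

/-- The least number of steps after which the code encoded by `m` returns a value on input `m`;
undefined if that code diverges on `m`. -/
def haltSearch (m : ℕ) : Part ℕ :=
  Nat.rfind fun k => Part.some (Code.evaln k (Denumerable.ofNat Code m) m).isSome

theorem haltSearch_partrec : Partrec haltSearch := by
  have h : Computable₂ fun m k : ℕ =>
      (Code.evaln k (Denumerable.ofNat Code m) m).isSome :=
    (Primrec.option_isSome.comp (Code.primrec_evaln.comp
      (Primrec.pair (Primrec.pair Primrec.snd ((Primrec.ofNat Code).comp Primrec.fst))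
        Primrec.fst))).to_comp
  exact Partrec.rfind h.partrec₂

theorem haltSearch_encode (c : Code) (h : (c.eval (Encodable.encode c)).Dom) :
    haltSearch (Encodable.encode c) = Part.some (haltTime c) := by
  have hne : {k | (Code.evaln k c (Encodable.encode c)).isSome}.Nonempty :=
    (exists_evaln_isSome_iff c _).2 h
  have hmem : (Code.evaln (haltTime c) c (Encodable.encode c)).isSome := Nat.sInf_mem hne
  rw [Part.eq_some_iff, haltSearch]
  simp only [Denumerable.ofNat_encode]
  refine Nat.mem_rfind.2 ⟨Part.mem_some_iff.2 hmem.symm, fun {k} hk => Part.mem_some_iff.2 ?_⟩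
  have hk' : ¬ (Code.evaln k c (Encodable.encode c)).isSome := Nat.notMem_of_lt_sInf hk
  simpa using hk'

/-- The promise problem `(Ayes, Ano)` is a genuine promise problem (disjoint), it is
decidable, but it is not totally decidable. -/
theorem haltingParity_decidable_not_totallyDecidable :
    Disjoint Ayes Ano ∧
    (∃ f : ℕ →. ℕ, Partrec f ∧ (∀ x ∈ Ayes, f x = Part.some 1) ∧
      (∀ x ∈ Ano, f x = Part.some 0)) ∧
    ¬ (∃ f : ℕ → ℕ, Computable f ∧ (∀ x ∈ Ayes, f x = 1) ∧ (∀ x ∈ Ano, f x = 0) ∧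
      ∀ x, x ∉ Ayes → x ∉ Ano → f x = 2) := by
  refine ⟨?_, ⟨fun m => (haltSearch m).map fun k => (k + 1) % 2, ?_, ?_, ?_⟩, ?_⟩
  · rw [Set.disjoint_left]
    rintro m ⟨c, rfl, -, hc⟩ ⟨d, hd, -, hd'⟩
    obtain rfl := Encodable.encode_injective hd
    exact Nat.not_even_iff_odd.2 hd' hc
  · have h : Computable fun k : ℕ => (k + 1) % 2 :=
      (Primrec.nat_mod.comp Primrec.succ (Primrec.const 2)).to_comp
    exact haltSearch_partrec.map (h.comp Computable.snd).to₂
  · rintro m ⟨c, rfl, hc, he⟩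
    simp only [haltSearch_encode c hc, Part.map_some, Part.some_inj]
    grind
  · rintro m ⟨c, rfl, hc, ho⟩
    simp only [haltSearch_encode c hc, Part.map_some, Part.some_inj]
    grind
  · rintro ⟨f, hf, hyes, hno, hout⟩
    -- The constant search halts on `n`, with value `0`, iff `f n = 2`.
    have hg : Partrec fun n : ℕ => Nat.rfind fun _ => Part.some (decide (f n = 2)) := by
      have h : Computable₂ fun n (_ : ℕ) => decide (f n = 2) :=
        ((Primrec.eq (α := ℕ)).decide.to_comp.comp hf (Computable.const 2)).comp Computable.fst
      exact Partrec.rfind h.partrec₂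
    obtain ⟨c, hc⟩ := Code.exists_code.1 (Partrec.nat_iff.1 hg)
    have hdom : (c.eval (Encodable.encode c)).Dom ↔ f (Encodable.encode c) = 2 := by
      rw [hc]
      refine Nat.rfind_dom.trans ⟨?_, fun h => ⟨0, ?_, fun h0 => absurd h0 (Nat.not_lt_zero _)⟩⟩
      · rintro ⟨-, h, -⟩
        simpa using h
      · simpa using h
    by_cases h : (c.eval (Encodable.encode c)).Dom
    · have h2 := hdom.1 h
      rcases Nat.even_or_odd (haltTime c) with he | ho
      · have := hyes _ ⟨c, rfl, h, he⟩
        omega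
      · have := hno _ ⟨c, rfl, h, ho⟩
        omega
    · refine h (hdom.2 (hout _ ?_ ?_))
      all_goals
        rintro ⟨d, hd, hd', -⟩
        obtain rfl := Encodable.encode_injective hd
        exact h hd'
end
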